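/- Let p, q be odd primes with p ≡ 1 (mod q), m ≥ 2, and G = ⟨s, t | t^p = s^{q^m} = 1, s⁻¹ t s = t^k⟩ where k has order q modulo p. Then the absolute center Z*(G) = {g ∈ G : α(g) = g for all α ∈ Aut(G)} equals ⟨s^{q^{m−1}}⟩, a cyclic group of order q. -/

import Mathlib

/-- Relations for the presentation `⟨s, t | t^p = s^(q^m) = 1, s⁻¹ t s = t^k⟩`,
with `s = of 0` and `t = of 1`. -/
def pqmRels (p q m k : ℕ) : Set (FreeGroup (Fin 2)) :=
  {FreeGroup.of 1 ^ p, FreeGroup.of 0 ^ (q ^ m),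
    (FreeGroup.of 0)⁻¹ * FreeGroup.of 1 * FreeGroup.of 0 * (FreeGroup.of 1 ^ k)⁻¹}

section helpers

variable {G : Type*} [Group G] {s t : G} {p q m k : ℕ}

lemma pqm_comm1 (hr : t * s = s * t ^ k) (b : ℕ) : t ^ b * s = s * t ^ (k * b) := by
  have h : SemiconjBy s (t ^ k) t := hr.symm
  have := h.pow_right b
  rw [← pow_mul] at this
  exact this.eq.symm

lemma pqm_comm (hr : t * s = s * t ^ k) (b c : ℕ) :
    t ^ b * s ^ c = s ^ c * t ^ (k ^ c * b) := by
  induction c with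
  | zero => simp
  | succ c ih =>
    rw [pow_succ, ← mul_assoc, ih, mul_assoc, pqm_comm1 hr, ← mul_assoc]
    congr 2
    ring

lemma pqm_nf (hr : t * s = s * t ^ k) (hp : 0 < p) (hn : 0 < q ^ m) (ht : t ^ p = 1)
    (hs : s ^ (q ^ m) = 1) (hgen : Subgroup.closure {s, t} = ⊤) (g : G) :
    ∃ a b : ℕ, g = s ^ a * t ^ b := by
  have hsi : s⁻¹ = s ^ (q ^ m - 1) := by
    rw [inv_eq_iff_mul_eq_one, ← pow_succ', Nat.sub_add_cancel hn, hs]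
  have hti : t⁻¹ = t ^ (p - 1) := by
    rw [inv_eq_iff_mul_eq_one, ← pow_succ', Nat.sub_add_cancel hp, ht]
  have key : ∀ a b c : ℕ, ∃ a' b' : ℕ, s ^ a * t ^ b * s ^ c = s ^ a' * t ^ b' := by
    intro a b c
    refine ⟨a + c, k ^ c * b, ?_⟩
    rw [mul_assoc, pqm_comm hr, ← mul_assoc, pow_add]
  have key2 : ∀ a b c : ℕ, ∃ a' b' : ℕ, s ^ a * t ^ b * t ^ c = s ^ a' * t ^ b' :=
    fun a b c => ⟨a, b + c, by rw [mul_assoc, pow_add]⟩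
  have hg : g ∈ Subgroup.closure {s, t} := by rw [hgen]; trivial
  induction hg using Subgroup.closure_induction_right with
  | one => exact ⟨0, 0, by simp⟩
  | mul_right x hx y hy ih =>
    obtain ⟨a, b, rfl⟩ := ih
    rcases hy with rfl | rfl
    · simpa using key a b 1
    · simpa using key2 a b 1
  | mul_inv_cancel x hx y hy ih =>
    obtain ⟨a, b, rfl⟩ := ih
    rcases hy with rfl | rfl
    · rw [hsi]; exact key a b _
    · rw [hti]; exact key2 a b _

lemma pqm_core (hp : p.Prime) (hq : q.Prime) (hpq : p % q = 1) (hm : 2 ≤ m)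
    (hk : orderOf (k : ZMod p) = q)
    (hr : t * s = s * t ^ k) (hs : s ^ (q ^ m) = 1)
    (hot : orderOf t = p) (hnf : ∀ g : G, ∃ a b : ℕ, g = s ^ a * t ^ b)
    (φ : G →* Multiplicative (ZMod (q ^ m))) (hφs : φ s = Multiplicative.ofAdd 1)
    (hφt : φ t = 1) (β : G ≃* G) (hβ : β s = s ^ (1 + q)) :
    ({g : G | ∀ α : G ≃* G, α g = g} =
        (Subgroup.zpowers (s ^ (q ^ (m - 1))) : Subgroup G)) ∧
      Nat.card (Subgroup.zpowers (s ^ (q ^ (m - 1)))) = q := by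
  have := Fact.mk hp
  have hqm : q ^ m = q ^ (m - 1) * q := by rw [← pow_succ]; congr 1; omega
  have hk1 : (k : ZMod p) ≠ 1 := by
    intro h; rw [h, orderOf_one] at hk; exact hq.one_lt.ne hk
  have hkq : (k : ZMod p) ^ q = 1 := by rw [← hk]; exact pow_orderOf_eq_one _
  have hk0 : (k : ZMod p) ≠ 0 := by
    intro h; rw [h, zero_pow hq.ne_zero] at hkq; exact zero_ne_one hkq
  have htt : ∀ a b : ℕ, t ^ a = t ^ b ↔ (a : ZMod p) = b := by
    intro a b
    rw [pow_eq_pow_iff_modEq, hot, ZMod.natCast_eq_natCast_iff]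
  have hφ : ∀ a b : ℕ, φ (s ^ a * t ^ b) = Multiplicative.ofAdd (a : ZMod (q ^ m)) := by
    intro a b
    rw [map_mul, map_pow, map_pow, hφs, hφt, one_pow, mul_one, ← ofAdd_nsmul, nsmul_one]
  have hos : orderOf s = q ^ m := by
    apply Nat.dvd_antisymm (orderOf_dvd_of_pow_eq_one hs)
    have h1 := hφ (orderOf s) 0
    rw [pow_orderOf_eq_one, pow_zero, one_mul, map_one] at h1
    have h2 : ((orderOf s : ℕ) : ZMod (q ^ m)) = 0 := (Multiplicative.ofAdd.injective h1).symm
    exact (ZMod.natCast_eq_zero_iff _ _).1 h2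
  -- elements commuting with s
  have hcs : ∀ a b : ℕ, Commute (s ^ a * t ^ b) s → t ^ b = 1 := by
    intro a b h
    have h1 : s ^ a * t ^ b * s = s * (s ^ a * t ^ b) := h
    rw [mul_assoc, pqm_comm1 hr, ← mul_assoc, ← mul_assoc, ← pow_succ, ← pow_succ',
      mul_right_inj, htt] at h1
    push_cast at h1
    have h2 : ((k : ZMod p) - 1) * b = 0 := by rw [sub_mul, h1]; ring
    have h3 : (b : ZMod p) = 0 := (mul_eq_zero.1 h2).resolve_left (sub_ne_zero.2 hk1)
    have := (htt b 0).2 (by simpa using h3)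
    simpa using this
  refine ⟨?_, ?_⟩
  · ext g
    constructor
    · intro hg
      have hg : ∀ α : G ≃* G, α g = g := hg
      obtain ⟨a, b, rfl⟩ := hnf g
      have h1 := hg (MulAut.conj s)
      rw [MulAut.conj_apply, mul_inv_eq_iff_eq_mul] at h1
      have hb := hcs a b h1.symm
      rw [hb, mul_one] at hg ⊢
      have h2 := hg β
      rw [map_pow, hβ, ← pow_mul, pow_eq_pow_iff_modEq, hos] at h2
      have h3 : q ^ m ∣ q * a := by
        have h4 : a + q * a ≡ a + 0 [MOD q ^ m] := by
          have : a + q * a = (1 + q) * a := by ring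
          rw [this]; exact h2
        exact (Nat.modEq_zero_iff_dvd).1 (Nat.ModEq.add_left_cancel' a h4)
      rw [hqm, mul_comm] at h3
      obtain ⟨c, rfl⟩ := Nat.dvd_of_mul_dvd_mul_left hq.pos h3
      rw [pow_mul]
      exact Subgroup.npow_mem_zpowers _ _
    · intro hg
      obtain ⟨n, rfl⟩ := Subgroup.mem_zpowers_iff.1 hg
      intro α
      rw [map_zpow]
      congr 1
      -- main computation
      obtain ⟨c, b, hα⟩ := hnf (α s)
      obtain ⟨e, d, hαt⟩ := hnf (α t)
      have ht : t ^ p = 1 := by rw [← hot]; exact pow_orderOf_eq_one _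
      have hcop : Nat.Coprime (q ^ m) p := by
        apply Nat.Coprime.pow_left
        rw [Nat.coprime_primes hq hp]
        rintro rfl
        simp at hpq
      have he : s ^ e = 1 := by
        rw [← orderOf_dvd_iff_pow_eq_one, hos]
        have h1 : φ (α t) ^ p = 1 := by rw [← map_pow, ← map_pow, ht, map_one, map_one]
        rw [hαt, hφ, ← ofAdd_nsmul] at h1
        have h2 : p • (e : ZMod (q ^ m)) = 0 := Multiplicative.ofAdd.injective h1
        rw [nsmul_eq_mul, ← Nat.cast_mul, ZMod.natCast_eq_zero_iff] at h2
        exact hcop.dvd_of_dvd_mul_left h2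
      rw [he, one_mul] at hαt
      have hd : (d : ZMod p) ≠ 0 := by
        intro h
        have h1 : t ^ d = t ^ 0 := (htt d 0).2 (by simpa using h)
        rw [pow_zero, ← hαt, map_eq_one_iff α α.injective] at h1
        rw [h1, orderOf_one] at hot
        exact hp.one_lt.ne hot
      have hrel := congrArg α hr
      rw [map_mul, map_mul, map_pow, hα, hαt, ← mul_assoc, pqm_comm hr, mul_assoc, mul_assoc,
        mul_right_inj, ← pow_mul, ← pow_add, ← pow_add, htt] at hrel
      push_cast at hrel
      have h5 : (k : ZMod p) ^ c = (k : ZMod p) ^ 1 := by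
        apply mul_right_cancel₀ hd
        linear_combination hrel
      have h6 : c ≡ 1 [MOD q] := by
        have hku : orderOf (Units.mk0 (k : ZMod p) hk0) = q := by
          rw [← hk, ← orderOf_units]; rfl
        rw [← hku, ← pow_eq_pow_iff_modEq]
        ext
        simpa using h5
      have hzc : ∀ g : G, Commute (s ^ q ^ (m - 1)) g := by
        intro g
        have hzt : Commute (s ^ q ^ (m - 1)) t := by
          have h7 := pqm_comm hr 1 (q ^ (m - 1))
          have h8 : t ^ (k ^ q ^ (m - 1) * 1) = t ^ 1 := by
            rw [htt]
            push_cast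
            obtain ⟨r, hr'⟩ : q ∣ q ^ (m - 1) := dvd_pow_self q (by omega)
            rw [hr', pow_mul, hkq]; simp
          rw [h8, pow_one] at h7
          exact h7.symm
        obtain ⟨a, b, rfl⟩ := hnf g
        exact ((Commute.refl s).pow_pow _ _).mul_right (hzt.pow_right b)
      obtain ⟨u, f, huf⟩ := hnf (α (s ^ q ^ (m - 1)))
      have hcomm : Commute (α (s ^ q ^ (m - 1))) s := by
        have := (hzc (α.symm s)).map α
        simpa using this
      rw [huf] at hcomm
      have hf := hcs u f hcomm
      have h9 := congrArg φ huf
      rw [hφ, map_pow, hα, map_pow, hφ, ← ofAdd_nsmul] at h9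
      have h10 : q ^ (m - 1) • (c : ZMod (q ^ m)) = u := Multiplicative.ofAdd.injective h9
      rw [nsmul_eq_mul, ← Nat.cast_mul, ZMod.natCast_eq_natCast_iff] at h10
      rw [huf, hf, mul_one, pow_eq_pow_iff_modEq, hos]
      refine h10.symm.trans ?_
      have h11 := h6.mul_left' (q ^ (m - 1))
      rwa [← hqm, mul_one] at h11
  · rw [Nat.card_zpowers, orderOf_pow' s (pow_pos hq.pos _).ne', hos, hqm, Nat.gcd_eq_right (Dvd.intro _ rfl)]
    exact Nat.mul_div_cancel_left _ (pow_pos hq.pos _)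

end helpers

section pres

variable {p q m k : ℕ}

lemma pqm_rel_t : (PresentedGroup.of 1 : PresentedGroup (pqmRels p q m k)) ^ p = 1 :=
  PresentedGroup.one_of_mem (rels := pqmRels p q m k) (x := FreeGroup.of 1 ^ p)
    (by simp [pqmRels])

lemma pqm_rel_s : (PresentedGroup.of 0 : PresentedGroup (pqmRels p q m k)) ^ (q ^ m) = 1 :=
  PresentedGroup.one_of_mem (rels := pqmRels p q m k) (x := FreeGroup.of 0 ^ (q ^ m))
    (by simp [pqmRels])

lemma pqm_rel_r : (PresentedGroup.of 1 : PresentedGroup (pqmRels p q m k)) * PresentedGroup.of 0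
    = PresentedGroup.of 0 * PresentedGroup.of 1 ^ k := by
  have h : (PresentedGroup.of 0 : PresentedGroup (pqmRels p q m k))⁻¹ * PresentedGroup.of 1 *
      PresentedGroup.of 0 * (PresentedGroup.of 1 ^ k)⁻¹ = 1 :=
    PresentedGroup.one_of_mem (rels := pqmRels p q m k)
      (x := (FreeGroup.of 0)⁻¹ * FreeGroup.of 1 * FreeGroup.of 0 * (FreeGroup.of 1 ^ k)⁻¹)
      (by simp [pqmRels])
  rw [mul_inv_eq_one, mul_assoc, inv_mul_eq_iff_eq_mul] at h
  exact h

lemma pqm_lift {H : Type*} [Group H] (x y : H) (hy : y ^ p = 1) (hx : x ^ (q ^ m) = 1)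
    (h : y * x = x * y ^ k) :
    ∃ f : PresentedGroup (pqmRels p q m k) →* H,
      f (PresentedGroup.of 0) = x ∧ f (PresentedGroup.of 1) = y := by
  have hrel : ∀ r ∈ pqmRels p q m k, FreeGroup.lift ![x, y] r = 1 := by
    intro r hr
    rcases hr with rfl | rfl | rfl
    · simpa using hy
    · simpa using hx
    · have h2 : x⁻¹ * y * x * (y ^ k)⁻¹ = 1 := by
        rw [mul_inv_eq_one, mul_assoc, inv_mul_eq_iff_eq_mul, h]
      simpa using h2
  exact ⟨PresentedGroup.toGroup hrel, by simp, by simp⟩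

end pres

/-- For odd primes `p ≡ 1 (mod q)`, `m ≥ 2` and `k` of order `q` mod `p`, the
absolute center of `G = C_p ⋊ C_{q^m} = ⟨s, t | t^p = s^(q^m) = 1, s⁻¹ t s = t^k⟩`
equals `⟨s^(q^(m-1))⟩`, a cyclic group of order `q`. -/
theorem absoluteCenter_eq {p q m k : ℕ} (hp : p.Prime) (hq : q.Prime)
    (hp2 : Odd p) (hq2 : Odd q) (hpq : p % q = 1) (hm : 2 ≤ m)
    (hk : orderOf (k : ZMod p) = q) :
    letI G := PresentedGroup (pqmRels p q m k)
    letI s : G := PresentedGroup.of 0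
    ({g : G | ∀ α : G ≃* G, α g = g} =
        (Subgroup.zpowers (s ^ (q ^ (m - 1))) : Subgroup G)) ∧
      Nat.card (Subgroup.zpowers ((PresentedGroup.of 0 : PresentedGroup (pqmRels p q m k)) ^ (q ^ (m - 1)))) = q := by
  have hqm0 : 0 < q ^ m := pow_pos hq.pos _
  have := Fact.mk hp
  have hkq : (k : ZMod p) ^ q = 1 := by rw [← hk]; exact pow_orderOf_eq_one _
  have hk0 : (k : ZMod p) ≠ 0 := by
    intro h; rw [h, zero_pow hq.ne_zero] at hkq; exact zero_ne_one hkq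
  have hr := pqm_rel_r (p := p) (q := q) (m := m) (k := k)
  have hs := pqm_rel_s (p := p) (q := q) (m := m) (k := k)
  have ht := pqm_rel_t (p := p) (q := q) (m := m) (k := k)
  have hgen : Subgroup.closure {(PresentedGroup.of 0 : PresentedGroup (pqmRels p q m k)),
      PresentedGroup.of 1} = ⊤ := by
    rw [← PresentedGroup.closure_range_of]
    congr 1
    ext x
    simp [Fin.exists_fin_two, eq_comm]
  have hnf := pqm_nf hr hp.pos hqm0 ht hs hgen
  have hot : orderOf (PresentedGroup.of 1 : PresentedGroup (pqmRels p q m k)) = p := by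
    refine orderOf_eq_prime ht ?_
    intro h1
    let κ := Units.mk0 (k : ZMod p) hk0
    have hκ : κ ^ q = 1 := by ext; simpa [κ] using hkq
    have hpow : ∀ n : ℕ, (Equiv.addRight (1 : ZMod p)) ^ n = Equiv.addRight (n : ZMod p) := by
      intro n
      induction n with
      | zero => ext; simp
      | succ n ih => ext x; rw [pow_succ, ih]; simp; ring
    obtain ⟨f, hf0, hf1⟩ := pqm_lift (p := p) (q := q) (m := m) (k := k)
      (MulAction.toPermHom (ZMod p)ˣ (ZMod p) κ⁻¹) (Equiv.addRight (1 : ZMod p))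
      (by rw [hpow]; ext; simp)
      (by
        rw [← map_pow, inv_pow, ← Nat.sub_add_cancel (show 1 ≤ m by omega), pow_succ', pow_mul,
          hκ, one_pow, inv_one, map_one])
      (by
        rw [hpow]
        ext x
        have : (κ⁻¹ : (ZMod p)ˣ) * (k : ZMod p) = 1 := κ.inv_mul
        change ((κ⁻¹ : (ZMod p)ˣ) : ZMod p) * x + 1 = ((κ⁻¹ : (ZMod p)ˣ) : ZMod p) * (x + (k : ZMod p))
        rw [mul_add, this])
    rw [h1, map_one] at hf1
    have := congrArg (fun e : Equiv.Perm (ZMod p) => e 0) hf1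
    simp at this
  obtain ⟨φ, hφs, hφt⟩ := pqm_lift (p := p) (q := q) (m := m) (k := k)
      (Multiplicative.ofAdd (1 : ZMod (q ^ m))) 1 (by simp)
      (by rw [← ofAdd_nsmul, nsmul_one, ZMod.natCast_self, ofAdd_zero]) (by simp)
  have hend : ∀ c : ℕ, ∃ f : PresentedGroup (pqmRels p q m k) →* PresentedGroup (pqmRels p q m k),
      c % q = 1 → (f (PresentedGroup.of 0) = PresentedGroup.of 0 ^ c ∧
        f (PresentedGroup.of 1) = PresentedGroup.of 1) := by
    intro c
    by_cases hc : c % q = 1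
    · obtain ⟨f, hf⟩ := pqm_lift (p := p) (q := q) (m := m) (k := k)
        ((PresentedGroup.of 0 : PresentedGroup (pqmRels p q m k)) ^ c) (PresentedGroup.of 1) ht
        (by rw [← pow_mul, mul_comm, pow_mul, hs, one_pow])
        (by
          have h := pqm_comm hr 1 c
          rw [pow_one, mul_one] at h
          rw [h, mul_right_inj, pow_eq_pow_iff_modEq, hot, ← ZMod.natCast_eq_natCast_iff]
          push_cast
          rw [← Nat.div_add_mod c q, hc, pow_add, pow_mul, hkq]; simp)
      exact ⟨f, fun _ => hf⟩
    · exact ⟨1, fun h => absurd h hc⟩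
  have h1q : (1 + q) % q = 1 := by rw [Nat.add_mod_right, Nat.mod_eq_of_lt hq.one_lt]
  have hcop : Nat.Coprime (1 + q) (q ^ m) := by
    apply Nat.Coprime.pow_right; simp
  obtain ⟨d, hd⟩ : ∃ d, (1 + q) * d ≡ 1 [MOD q ^ m] := by
    obtain ⟨d, hd⟩ := Nat.exists_mul_mod_eq_one_of_coprime hcop (Nat.one_lt_pow (by omega) hq.one_lt)
    exact ⟨d, by rw [Nat.ModEq, hd.2, Nat.mod_eq_of_lt (Nat.one_lt_pow (by omega) hq.one_lt)]⟩
  have hdq : d % q = 1 := by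
    have h := hd.of_dvd (dvd_pow_self q (show m ≠ 0 by omega))
    have h2 : (1 + q) * d = d + q * d := by ring
    rw [h2, Nat.ModEq, Nat.add_mul_mod_self_left, Nat.mod_eq_of_lt hq.one_lt] at h
    exact h
  obtain ⟨f, hf⟩ := hend (1 + q)
  obtain ⟨g, hg⟩ := hend d
  obtain ⟨hf0, hf1⟩ := hf h1q
  obtain ⟨hg0, hg1⟩ := hg hdq
  have hsd : (PresentedGroup.of 0 : PresentedGroup (pqmRels p q m k)) ^ ((1 + q) * d) =
      PresentedGroup.of 0 := by
    conv_rhs => rw [← pow_one (PresentedGroup.of 0)]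
    rw [pow_eq_pow_iff_modEq]
    exact hd.of_dvd (orderOf_dvd_of_pow_eq_one hs)
  let β : PresentedGroup (pqmRels p q m k) ≃* PresentedGroup (pqmRels p q m k) :=
    MonoidHom.toMulEquiv f g
      (by
        ext i
        fin_cases i
        · simp [hf0, hg0, ← pow_mul, mul_comm d, hsd]
        · simp [hf1, hg1])
      (by
        ext i
        fin_cases i
        · simp [hf0, hg0, ← pow_mul, hsd]
        · simp [hf1, hg1])
  exact pqm_core hp hq hpq hm hk hr hs hot hnf φ hφs hφt β hf0
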